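/- Let n ≥ 1, k ≥ 1, ε > 0, κ ∈ [0,1], and let Ω ⊂ ℝ^{n+1} be a bounded open set. Let u be smooth on the closure of Ω with u = 0 on ∂Ω and satisfy div(∇u/√(ε² + |∇u|²)) = −κ (ε² + |∇u|²)^{−1/(2k)} at every point of Ω. Then sup_Ω |∇u| ≤ sup_{∂Ω} √(ε² + |∇u|²), where on the right-hand side ∇u denotes the continuous extension of the gradient of u to ∂Ω. -/

import Mathlib

open MeasureTheory Metric Set

/-- The divergence of a vector field `F` on `ℝ^{n+1}`: the trace of its Fréchet derivative. -/
noncomputable def vdiv {n : ℕ}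
    (F : EuclideanSpace ℝ (Fin (n + 1)) → EuclideanSpace ℝ (Fin (n + 1)))
    (x : EuclideanSpace ℝ (Fin (n + 1))) : ℝ :=
  LinearMap.trace ℝ (EuclideanSpace ℝ (Fin (n + 1)))
    (fderiv ℝ F x : EuclideanSpace ℝ (Fin (n + 1)) →ₗ[ℝ] EuclideanSpace ℝ (Fin (n + 1)))

/-- The gradient of `u`, computed within the closure of `Ω` (so that it also represents
the continuous extension of the gradient up to the boundary of `Ω`). -/
noncomputable def gradC {n : ℕ} (Ω : Set (EuclideanSpace ℝ (Fin (n + 1))))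
    (u : EuclideanSpace ℝ (Fin (n + 1)) → ℝ)
    (x : EuclideanSpace ℝ (Fin (n + 1))) : EuclideanSpace ℝ (Fin (n + 1)) :=
  (InnerProductSpace.toDual ℝ (EuclideanSpace ℝ (Fin (n + 1)))).symm
    (fderivWithin ℝ u (closure Ω) x)

/-!
Differentiating `div (X(∇u)) = H(∇u)` in a constant direction `e` shows that `⟪e, ∇u⟫` solves
`tr (DX(∇u) D²f) + b · ∇f = 0` for a continuous `b`. When `DX` is positive definite this equation
is elliptic without zeroth order term, so `⟪e, ∇u⟫` is bounded by its boundary values; for a given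
`x`, take `e` to be the direction of `∇u x`.

The derivative of `u` within `closure Ω` need not be unique at a boundary point, hence need not be
the continuous extension of `∇u` there. The points where it is unique are dense in `∂Ω`, since
they include the points of `∂Ω` nearest to points of `Ω`. At the others `u = 0` on `∂Ω` makes zero
a derivative, which is then the value of `fderivWithin`; so the boundary gradients are bounded, and
their `sSup` is not the junk value `0`.
-/

open Filter Topology RealInnerProductSpace Gradient

section SecondDerivativeTest

variable {E : Type*} [NormedAddCommGroup E] [InnerProductSpace ℝ E]

theorem second_deriv_nonpos_of_isLocalMax {f f' : ℝ → ℝ} {a c : ℝ} (h : IsLocalMax f a)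
    (hf : ∀ᶠ t in 𝓝 a, HasDerivAt f (f' t) t) (hf' : HasDerivAt f' c a) : c ≤ 0 := by
  by_contra! hc
  have hd : deriv f =ᶠ[𝓝 a] f' := hf.mono fun t ht => ht.deriv
  have hdd : deriv (deriv f) a = c := by rw [hd.deriv_eq, hf'.deriv]
  have hmin : IsLocalMin f a :=
    isLocalMin_of_deriv_deriv_pos (hdd ▸ hc) h.deriv_eq_zero hf.self_of_nhds.continuousAt
  have hconst : f =ᶠ[𝓝 a] fun _ => f a := by
    filter_upwards [h, hmin] with t h1 h2 using le_antisymm h1 h2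
  have hzero : deriv (deriv f) a = 0 := by simp [hconst.deriv.deriv_eq]
  exact hc.ne' (hdd.symm.trans hzero)

variable [CompleteSpace E] {f : E → ℝ} {x : E}

theorem contDiffAt_gradient {n : WithTop ℕ∞} (hf : ContDiffAt ℝ (n + 1) f x) :
    ContDiffAt ℝ n (∇ f) x :=
  (InnerProductSpace.toDual ℝ E).symm.contDiff.contDiffAt.comp x (hf.fderiv_right le_rfl)

theorem inner_fderiv_gradient (hf : ContDiffAt ℝ 2 f x) (v w : E) :
    ⟪fderiv ℝ (∇ f) x v, w⟫ = fderiv ℝ (fderiv ℝ f) x v w := by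
  have hgrad := ((contDiffAt_gradient (n := 1) hf).differentiableAt one_ne_zero).hasFDerivAt
  have hderiv := ((hf.fderiv_right (m := 1) le_rfl).differentiableAt one_ne_zero).hasFDerivAt
  have hinner := hgrad.inner ℝ (hasFDerivAt_const w x)
  simp only [inner_gradient_left] at hinner
  simpa using DFunLike.congr_fun (hinner.unique (hderiv.clm_apply (hasFDerivAt_const w x))) v

theorem isSymmetric_fderiv_gradient (hf : ContDiffAt ℝ 2 f x) :
    (fderiv ℝ (∇ f) x : E →ₗ[ℝ] E).IsSymmetric := fun v w => by
  simpa only [ContinuousLinearMap.coe_coe, inner_fderiv_gradient hf, real_inner_comm _ v]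
    using (hf.isSymmSndFDerivAt (by simp)).eq v w

theorem inner_fderiv_gradient_self_nonpos_of_isLocalMax (hf : ContDiffAt ℝ 2 f x)
    (hmax : IsLocalMax f x) (w : E) : ⟪fderiv ℝ (∇ f) x w, w⟫ ≤ 0 := by
  have hline (t : ℝ) : HasDerivAt (fun s : ℝ => x + s • w) w t := by
    simpa using ((hasDerivAt_id t).smul_const w).const_add x
  have htend : Tendsto (fun s : ℝ => x + s • w) (𝓝 0) (𝓝 x) :=
    Continuous.tendsto' (by fun_prop) _ _ (by simp)
  have hmax' : IsLocalMax (fun s : ℝ => f (x + s • w)) 0 := by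
    simpa [IsLocalMax, IsMaxFilter] using htend.eventually hmax
  have hfirst : ∀ᶠ s in 𝓝 (0 : ℝ),
      HasDerivAt (fun s : ℝ => f (x + s • w)) ⟪∇ f (x + s • w), w⟫ s := by
    filter_upwards [htend.eventually (hf.eventually (by simp))] with s hs
    rw [inner_gradient_left]
    exact (hs.differentiableAt (by norm_num)).hasFDerivAt.comp_hasDerivAt s (hline s)
  have hsecond : HasDerivAt (fun s : ℝ => ⟪∇ f (x + s • w), w⟫) ⟪fderiv ℝ (∇ f) x w, w⟫ 0 := by
    have hgrad := ((contDiffAt_gradient (n := 1) hf).differentiableAt (by norm_num)).hasFDerivAt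
    have := HasFDerivAt.comp_hasDerivAt_of_eq 0 hgrad (hline 0) (by simp)
    simpa using this.inner ℝ (hasDerivAt_const (0 : ℝ) w)
  exact second_deriv_nonpos_of_isLocalMax hmax' hfirst hsecond

theorem isPositive_neg_fderiv_gradient_of_isLocalMax (hf : ContDiffAt ℝ 2 f x)
    (hmax : IsLocalMax f x) : (-fderiv ℝ (∇ f) x : E →ₗ[ℝ] E).IsPositive :=
  ⟨fun v w => by simpa using isSymmetric_fderiv_gradient hf v w, fun w => by
    simpa using inner_fderiv_gradient_self_nonpos_of_isLocalMax hf hmax w⟩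

end SecondDerivativeTest

section MaximumPrinciple

variable {E : Type*} [NormedAddCommGroup E] [InnerProductSpace ℝ E] [FiniteDimensional ℝ E]

theorem trace_comp_nonneg {A B : E →ₗ[ℝ] E} (hA : ∀ w, 0 ≤ ⟪A w, w⟫) (hB : B.IsPositive) :
    0 ≤ LinearMap.trace ℝ E (A ∘ₗ B) := by
  set v := hB.isSymmetric.eigenvectorBasis rfl
  rw [LinearMap.trace_eq_sum_inner _ v]
  refine Finset.sum_nonneg fun i _ => ?_
  rw [LinearMap.comp_apply, hB.isSymmetric.apply_eigenvectorBasis, map_smul,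
    real_inner_smul_right, real_inner_comm]
  exact mul_nonneg (hB.nonneg_eigenvalues rfl i) (hA _)

variable (E) in
/-- The trace, as a continuous linear functional on the endomorphisms of `E`. -/
noncomputable def traceCLM : (E →L[ℝ] E) →L[ℝ] ℝ :=
  LinearMap.toContinuousLinearMap (LinearMap.trace ℝ E ∘ₗ ContinuousLinearMap.coeLM ℝ)

theorem traceCLM_apply (T : E →L[ℝ] E) : traceCLM E T = LinearMap.trace ℝ E T := rfl

/-- The second order operator `f ↦ tr (A D²f) + b · ∇f` in nondivergence form; the Hessian is
represented by the derivative of the gradient and `b` by a field of linear functionals. -/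
noncomputable def secondOrderOp (A : E → E →L[ℝ] E) (b : E → E →L[ℝ] ℝ) (f : E → ℝ) (x : E) : ℝ :=
  traceCLM E (A x ∘L fderiv ℝ (∇ f) x) + b x (∇ f x)

variable {A : E → E →L[ℝ] E} {b : E → E →L[ℝ] ℝ} {f g : E → ℝ} {x : E}

theorem secondOrderOp_congr (h : f =ᶠ[𝓝 x] g) :
    secondOrderOp A b f x = secondOrderOp A b g x := by
  rw [secondOrderOp, secondOrderOp, h.gradient.fderiv_eq, h.gradient.self_of_nhds]

theorem secondOrderOp_add (hf : ContDiffAt ℝ 2 f x) (hg : ContDiffAt ℝ 2 g x) :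
    secondOrderOp A b (fun z => f z + g z) x
      = secondOrderOp A b f x + secondOrderOp A b g x := by
  have hgrad : ∇ (fun z => f z + g z) =ᶠ[𝓝 x] fun z => ∇ f z + ∇ g z := by
    filter_upwards [hf.eventually (by simp), hg.eventually (by simp)] with z hfz hgz
    simp only [gradient, fderiv_fun_add (hfz.differentiableAt (by norm_num))
      (hgz.differentiableAt (by norm_num)), map_add]
  rw [secondOrderOp, hgrad.fderiv_eq, hgrad.self_of_nhds, fderiv_fun_add
    ((contDiffAt_gradient (n := 1) hf).differentiableAt (by norm_num))
    ((contDiffAt_gradient (n := 1) hg).differentiableAt (by norm_num))]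
  simp only [secondOrderOp, ContinuousLinearMap.comp_add, map_add]
  ring

theorem secondOrderOp_nonpos_of_isLocalMax (hA : ∀ w, 0 ≤ ⟪A x w, w⟫) (hf : ContDiffAt ℝ 2 f x)
    (hmax : IsLocalMax f x) : secondOrderOp A b f x ≤ 0 := by
  have hcrit : ∇ f x = 0 := by simp [gradient, hmax.fderiv_eq_zero]
  have htrace := trace_comp_nonneg (A := (A x : E →ₗ[ℝ] E)) hA
    (isPositive_neg_fderiv_gradient_of_isLocalMax hf hmax)
  rw [LinearMap.comp_neg, map_neg] at htrace
  rw [secondOrderOp, hcrit, map_zero, add_zero]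
  exact neg_nonneg.1 htrace

theorem secondOrderOp_mul_exp_inner (e : E) (c l : ℝ) :
    secondOrderOp A b (fun z => c * Real.exp (l * ⟪e, z⟫)) x
      = c * Real.exp (l * ⟪e, x⟫) * l * (l * ⟪A x e, e⟫ + b x e) := by
  have hexp (c z) : HasFDerivAt (fun z => c * Real.exp (l * ⟪e, z⟫))
      ((c * Real.exp (l * ⟪e, z⟫) * l) • innerSL ℝ e) z := by
    simpa [smul_smul, mul_assoc] using
      ((((innerSL ℝ e).hasFDerivAt (x := z)).const_mul l).exp.const_mul c)
  have hgrad : ∇ (fun z => c * Real.exp (l * ⟪e, z⟫))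
      = fun z => ((c * l) * Real.exp (l * ⟪e, z⟫)) • e := by
    ext1 z
    rw [gradient, (hexp c z).fderiv, map_smul, mul_right_comm]
    congr 1
    exact (InnerProductSpace.toDual ℝ E).symm_apply_apply e
  have hhess := ((hexp (c * l) x).smul_const e).fderiv
  rw [secondOrderOp, hgrad, hhess, traceCLM_apply]
  have hcomp : A x ∘L ((c * l * Real.exp (l * ⟪e, x⟫) * l) • innerSL ℝ e).smulRight e
      = ((c * l * Real.exp (l * ⟪e, x⟫) * l) • innerSL ℝ e).smulRight (A x e) := by
    ext w; simp
  rw [hcomp, ContinuousLinearMap.coe_smulRight, LinearMap.trace_smulRight]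
  simp only [real_inner_comm, ContinuousLinearMap.toLinearMap_smul, map_smul,
    ContinuousLinearMap.toLinearMap_innerSL_apply, LinearMap.smul_apply, innerₛₗ_apply_apply,
    smul_eq_mul]
  ring

theorem exists_isLocalMax_add_mul {X : Type*} [TopologicalSpace X] {Ω : Set X} {f h : X → ℝ}
    {m : ℝ} {x : X} (hΩo : IsOpen Ω) (hΩc : IsCompact (closure Ω))
    (hf : ContinuousOn f (closure Ω)) (hh : ContinuousOn h (closure Ω))
    (hm : ∀ z ∈ frontier Ω, f z < m) (hx : x ∈ Ω) (hmx : m < f x) :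
    ∃ δ > 0, ∃ y ∈ Ω, m ≤ f y ∧ IsLocalMax (fun z => f z + δ * h z) y := by
  have hx' : x ∈ closure Ω := subset_closure hx
  obtain ⟨C, hC⟩ := hΩc.exists_bound_of_continuousOn hh
  have hC0 : 0 ≤ C := (norm_nonneg _).trans (hC x hx')
  set δ := (f x - m) / (2 * C + 1)
  have hδ : 0 < δ := div_pos (sub_pos.2 hmx) (by positivity)
  have hδC : δ * (2 * C + 1) = f x - m := div_mul_cancel₀ _ (by positivity)
  obtain ⟨y, hy, hmax⟩ := hΩc.exists_isMaxOn ⟨x, hx'⟩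
    (f := fun z => f z + δ * h z) (by fun_prop)
  have hmy : m ≤ f y := by
    have hle : f x + δ * h x ≤ f y + δ * h y := hmax hx'
    have hosc : δ * (h y - h x) ≤ δ * (2 * C) :=
      mul_le_mul_of_nonneg_left
        (by linarith [(abs_le.1 (hC y hy)).2, (abs_le.1 (hC x hx')).1]) hδ.le
    linarith
  have hyΩ : y ∈ Ω := by
    by_contra hyΩ
    exact (hm y (hΩo.frontier_eq ▸ ⟨hy, hyΩ⟩)).not_ge hmy
  exact ⟨δ, hδ, y, hyΩ, hmy,
    hmax.isLocalMax (mem_of_superset (hΩo.mem_nhds hyΩ) subset_closure)⟩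

theorem exists_forall_secondOrderOp_exp_pos {K : Set E} {e : E} (hK : IsCompact K)
    (hA : ContinuousOn A K) (hb : ContinuousOn b K) (he : ∀ z ∈ K, 0 < ⟪A z e, e⟫) :
    ∃ l : ℝ, ∀ z ∈ K, ∀ δ > 0,
      0 < secondOrderOp A b (fun z => δ * Real.exp (l * ⟪e, z⟫)) z := by
  have hratio : ContinuousOn (fun z => -b z e / ⟪A z e, e⟫) K :=
    ContinuousOn.div (by fun_prop) (by fun_prop) fun z hz => (he z hz).ne'
  obtain ⟨l₀, hl₀⟩ := hK.bddAbove_image hratio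
  have hl : 0 < max l₀ 0 + 1 := by positivity
  refine ⟨max l₀ 0 + 1, fun z hz δ hδ => ?_⟩
  have hlt : -b z e / ⟪A z e, e⟫ < max l₀ 0 + 1 :=
    (hl₀ (mem_image_of_mem _ hz)).trans_lt (by linarith [le_max_left l₀ 0])
  have hpos : 0 < (max l₀ 0 + 1) * ⟪A z e, e⟫ + b z e := by
    linarith [(div_lt_iff₀ (he z hz)).1 hlt]
  rw [secondOrderOp_mul_exp_inner]
  exact mul_pos (mul_pos (mul_pos hδ (Real.exp_pos _)) hl) hpos

theorem le_of_secondOrderOp_nonneg {Ω : Set E} {e : E} {M : ℝ} (hΩo : IsOpen Ω)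
    (hΩb : Bornology.IsBounded Ω) (hAc : ContinuousOn A Ω) (hbc : ContinuousOn b Ω)
    (hA : ∀ z ∈ Ω, ∀ w, 0 ≤ ⟪A z w, w⟫) (he : ∀ z ∈ Ω, 0 < ⟪A z e, e⟫)
    (hfc : ContinuousOn f (closure Ω)) (hf : ∀ z ∈ Ω, ContDiffAt ℝ 2 f z)
    (hL : ∀ z ∈ Ω, 0 ≤ secondOrderOp A b f z) (hM : ∀ z ∈ frontier Ω, f z ≤ M) (hx : x ∈ Ω) :
    f x ≤ M := by
  by_contra! hlt
  obtain ⟨m, hMm, hmx⟩ := exists_between hlt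
  have hm (z) (hz : z ∈ frontier Ω) : f z < m := (hM z hz).trans_lt hMm
  set K := closure Ω ∩ f ⁻¹' Ici m
  have hK : IsCompact K := hΩb.isCompact_closure.of_isClosed_subset
    (hfc.preimage_isClosed_of_isClosed isClosed_closure isClosed_Ici) inter_subset_left
  have hKΩ : K ⊆ Ω := fun z hz => by
    by_contra hzΩ
    exact (hm z (hΩo.frontier_eq ▸ ⟨hz.1, hzΩ⟩)).not_ge hz.2
  obtain ⟨l, hl⟩ := exists_forall_secondOrderOp_exp_pos hK (hAc.mono hKΩ) (hbc.mono hKΩ)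
    fun z hz => he z (hKΩ hz)
  obtain ⟨δ, hδ, y, hy, hmy, hmax⟩ := exists_isLocalMax_add_mul hΩo hΩb.isCompact_closure hfc
    (h := fun z => Real.exp (l * ⟪e, z⟫)) (by fun_prop) hm hx hmx
  have hexp : ContDiffAt ℝ 2 (fun z => δ * Real.exp (l * ⟪e, z⟫)) y :=
    contDiffAt_const.mul (contDiffAt_const.mul (contDiffAt_const.inner ℝ contDiffAt_id)).exp
  have hnonpos := secondOrderOp_nonpos_of_isLocalMax (b := b) (hA y hy) ((hf y hy).add hexp) hmax
  rw [secondOrderOp_add (hf y hy) hexp] at hnonpos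
  linarith [hL y hy, hl y ⟨subset_closure hy, hmy⟩ δ hδ]

end MaximumPrinciple

section Linearization

variable {E : Type*} [NormedAddCommGroup E] [InnerProductSpace ℝ E] [FiniteDimensional ℝ E]

/-- The divergence of a vector field in any finite dimension; on `ℝ^{n+1}` it is `vdiv`
(definitionally). The trace is taken in continuous form so that it can be differentiated. -/
noncomputable def divergence (F : E → E) (x : E) : ℝ := traceCLM E (fderiv ℝ F x)

/-- The first order coefficient `w ↦ tr (D²X(∇u) w ∘ D²u) - DH(∇u) w` of the linearization of
`div (X(∇u)) = H(∇u)`, whose second order coefficient is `DX(∇u)`. -/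
noncomputable def linearizedDrift (X : E → E) (H : E → ℝ) (u : E → ℝ) (x : E) : E →L[ℝ] ℝ :=
  traceCLM E ∘L (ContinuousLinearMap.compL ℝ E E E).flip (fderiv ℝ (∇ u) x) ∘L
    fderiv ℝ (fderiv ℝ X) (∇ u x) - fderiv ℝ H (∇ u x)

variable {X : E → E} {H : E → ℝ} {u : E → ℝ} {x : E}

theorem continuousAt_linearizedDrift (hX : ContDiff ℝ 2 X) (hH : ContDiff ℝ 1 H)
    (hu : ContDiffAt ℝ 3 u x) : ContinuousAt (linearizedDrift X H u) x := by
  have hgrad : ContDiffAt ℝ 2 (∇ u) x := contDiffAt_gradient (n := 2) hu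
  have hgc := hgrad.continuousAt
  have hDgc : ContinuousAt (fderiv ℝ (∇ u)) x :=
    (hgrad.fderiv_right (m := 1) le_rfl).continuousAt
  have hDX : Continuous (fderiv ℝ (fderiv ℝ X)) :=
    (hX.fderiv_right (m := 1) le_rfl).continuous_fderiv one_ne_zero
  have hDH : Continuous (fderiv ℝ H) := hH.continuous_fderiv one_ne_zero
  unfold linearizedDrift
  fun_prop

theorem gradient_inner_gradient (hu : ContDiffAt ℝ 2 u x) (e : E) :
    ∇ (fun z => ⟪e, ∇ u z⟫) x = fderiv ℝ (∇ u) x e := by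
  have hgrad := ((contDiffAt_gradient (n := 1) hu).differentiableAt one_ne_zero).hasFDerivAt
  refine ext_inner_right ℝ fun w => ?_
  rw [inner_gradient_left, ((hasFDerivAt_const e x).inner ℝ hgrad).fderiv]
  simpa using isSymmetric_fderiv_gradient hu e w |>.symm

theorem secondOrderOp_inner_gradient_eq_zero (hX : ContDiff ℝ 2 X) (hH : ContDiff ℝ 1 H)
    (hu : ContDiffAt ℝ 3 u x)
    (hpde : ∀ᶠ z in 𝓝 x, divergence (fun y => X (∇ u y)) z = H (∇ u z)) (e : E) :
    secondOrderOp (fun z => fderiv ℝ X (∇ u z)) (linearizedDrift X H u)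
      (fun z => ⟪e, ∇ u z⟫) x = 0 := by
  have hnear := hu.eventually (by simp)
  have hgrad : ContDiffAt ℝ 2 (∇ u) x := contDiffAt_gradient (n := 2) hu
  have hg := (hgrad.differentiableAt two_ne_zero).hasFDerivAt
  have hDg := ((hgrad.fderiv_right (m := 1) le_rfl).differentiableAt one_ne_zero).hasFDerivAt
  have hDX := (((hX.fderiv_right (m := 1) le_rfl).differentiable one_ne_zero) (∇ u x)).hasFDerivAt
  have hHd := (hH.differentiable one_ne_zero (∇ u x)).hasFDerivAt
  have hchain : (fun z => traceCLM E (fderiv ℝ X (∇ u z) ∘L fderiv ℝ (∇ u) z) - H (∇ u z))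
      =ᶠ[𝓝 x] fun _ => 0 := by
    filter_upwards [hpde, hnear] with z hz huz
    have hgz := (contDiffAt_gradient (n := 2) huz).differentiableAt two_ne_zero
    rw [sub_eq_zero, ← hz, divergence,
      ← fderiv_fun_comp z (hX.differentiable two_ne_zero (∇ u z)) hgz]
  have hdiff := ((traceCLM E).hasFDerivAt.comp x ((hDX.comp x hg).clm_comp hDg)).sub
    (hHd.comp x hg)
  have hzero := DFunLike.congr_fun
    ((hdiff.congr_of_eventuallyEq hchain.symm).unique (hasFDerivAt_const 0 x)) e
  have hgradf : ∇ (fun z => ⟪e, ∇ u z⟫) =ᶠ[𝓝 x] fun z => fderiv ℝ (∇ u) z e := by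
    filter_upwards [hnear] with z huz using gradient_inner_gradient (huz.of_le (by norm_num)) e
  have hessf : fderiv ℝ (fun z => fderiv ℝ (∇ u) z e) x = fderiv ℝ (fderiv ℝ (∇ u)) x e := by
    ext w
    rw [(hDg.clm_apply (hasFDerivAt_const e x)).fderiv]
    simpa using (hgrad.isSymmSndFDerivAt (by simp)).eq w e
  rw [secondOrderOp, hgradf.fderiv_eq, hgradf.self_of_nhds, hessf]
  simpa [linearizedDrift, add_sub_assoc] using hzero

theorem inner_gradient_le_of_forall_frontier {Ω : Set E} {G : E → E} {e : E} {M : ℝ}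
    (hX : ContDiff ℝ 2 X) (hX_pos : ∀ p w, w ≠ 0 → 0 < ⟪fderiv ℝ X p w, w⟫)
    (hH : ContDiff ℝ 1 H) (hΩo : IsOpen Ω) (hΩb : Bornology.IsBounded Ω)
    (hu : ContDiffOn ℝ 3 u Ω)
    (hu_pde : ∀ z ∈ Ω, divergence (fun y => X (∇ u y)) z = H (∇ u z))
    (hGc : ContinuousOn G (closure Ω)) (hG : EqOn G (∇ u) Ω) (he : e ≠ 0)
    (hM : ∀ z ∈ frontier Ω, ⟪e, G z⟫ ≤ M) (hx : x ∈ Ω) : ⟪e, ∇ u x⟫ ≤ M := by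
  have hu3 (z) (hz : z ∈ Ω) : ContDiffAt ℝ 3 u z := hu.contDiffAt (hΩo.mem_nhds hz)
  have hgrad (z) (hz : z ∈ Ω) : ContDiffAt ℝ 2 (∇ u) z := contDiffAt_gradient (n := 2) (hu3 z hz)
  have hGe (z) (hz : z ∈ Ω) : (fun y => ⟪e, G y⟫) =ᶠ[𝓝 z] fun y => ⟪e, ∇ u y⟫ := by
    filter_upwards [hΩo.mem_nhds hz] with y hy using by rw [hG hy]
  rw [← hG hx]
  refine le_of_secondOrderOp_nonneg (f := fun y => ⟪e, G y⟫) (A := fun z => fderiv ℝ X (∇ u z))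
    (b := linearizedDrift X H u) hΩo hΩb (fun z hz => ?_)
    (fun z hz => (continuousAt_linearizedDrift hX hH (hu3 z hz)).continuousWithinAt)
    (fun z _ w => ?_) (fun z _ => hX_pos _ e he) (by fun_prop) (fun z hz => ?_)
    (fun z hz => ?_) hM hx
  · exact ((hX.continuous_fderiv two_ne_zero).continuousAt.comp
      (hgrad z hz).continuousAt).continuousWithinAt
  · rcases eq_or_ne w 0 with rfl | hw
    · simp
    · exact (hX_pos _ w hw).le
  · exact (contDiffAt_const.inner ℝ (hgrad z hz)).congr_of_eventuallyEq (hGe z hz)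
  · rw [secondOrderOp_congr (hGe z hz), secondOrderOp_inner_gradient_eq_zero hX hH (hu3 z hz)
      (eventually_of_mem (hΩo.mem_nhds hz) hu_pde)]

end Linearization

section BoundaryDerivative

variable {E : Type*} [NormedAddCommGroup E] [NormedSpace ℝ E] {s Ω : Set E} {x : E}

theorem ball_subset_tangentConeAt_of_lt_infDist {l : Filter E} [l.NeBot] {v : E} {η : ℝ}
    (hl : l ≤ 𝓝 x) (hne : ∀ᶠ y in l, y ≠ x) (hfar : ∀ᶠ y in l, η * ‖y - x‖ < infDist y sᶜ)
    (hv : Tendsto (fun y => ‖y - x‖⁻¹ • (y - x)) l (𝓝 v)) : ball v η ⊆ tangentConeAt ℝ s x := by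
  intro w hw
  rw [mem_ball_iff_norm] at hw
  have hsub : Tendsto (fun y => y - x) l (𝓝 0) := tendsto_sub_nhds_zero_iff.2 hl
  refine mem_tangentConeAt_of_seq l (fun y => ‖y - x‖⁻¹)
    (fun y => (y - x) + ‖y - x‖ • (w - v)) ?_ ?_ ?_
  · simpa using hsub.add (hsub.norm.smul_const (w - v))
  · filter_upwards [hfar] with y hy
    rw [← add_assoc, add_sub_cancel, ← notMem_compl_iff]
    intro hmem
    have hle := infDist_le_dist_of_mem (x := y) hmem
    rw [dist_self_add_right, norm_smul, norm_norm, mul_comm] at hle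
    exact (hy.trans_le hle).not_ge (mul_le_mul_of_nonneg_right hw.le (norm_nonneg _))
  · refine (hv.add_const (w - v)).congr' ?_ |>.trans_eq (by simp)
    filter_upwards [hne] with y hy
    rw [smul_add, inv_smul_smul₀ (norm_ne_zero_iff.2 (sub_ne_zero.2 hy))]

variable [FiniteDimensional ℝ E]

/- Otherwise `s` contains balls of radius comparable to `‖y - x‖` around points `y` tending to `x`;
rescaling them by `‖y - x‖⁻¹` yields a ball in the tangent cone. -/
theorem isLittleO_infDist_compl_of_not_uniqueDiffWithinAt (h : ¬UniqueDiffWithinAt ℝ s x) :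
    (fun y => infDist y sᶜ) =o[𝓝[s] x] fun y => y - x := by
  rw [Asymptotics.isLittleO_iff]
  intro η hη
  by_contra hbad
  obtain ⟨U, hU⟩ := exists_ultrafilter_iff.2 (frequently_iff_neBot.1 (not_eventually.1 hbad))
  have hUx : (U : Filter E) ≤ 𝓝[s] x := hU.trans inf_le_left
  have hfar : ∀ᶠ y in (U : Filter E), η * ‖y - x‖ < infDist y sᶜ := by
    filter_upwards [le_principal_iff.1 (hU.trans inf_le_right)] with y hy
    simpa [Real.norm_of_nonneg infDist_nonneg] using hy
  have hne : ∀ᶠ y in (U : Filter E), y ≠ x := by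
    have hx : infDist x sᶜ = 0 := infDist_zero_of_mem_closure <| by
      rw [closure_compl, mem_compl_iff, mem_interior_iff_mem_nhds]
      exact mt uniqueDiffWithinAt_of_mem_nhds h
    filter_upwards [hfar] with y hy hyx
    simp [hyx, hx] at hy
  have hunit : ∀ᶠ y in (U : Filter E), ‖y - x‖⁻¹ • (y - x) ∈ closedBall (0 : E) 1 :=
    Eventually.of_forall fun y => by
      rw [mem_closedBall_zero_iff, norm_smul, norm_inv, norm_norm]
      exact inv_mul_le_one
  obtain ⟨v, -, hv⟩ := (isCompact_closedBall (0 : E) 1).ultrafilter_le_nhds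
    (U.map fun y => ‖y - x‖⁻¹ • (y - x)) (le_principal_iff.2 hunit)
  have hball := ball_subset_tangentConeAt_of_lt_infDist (hUx.trans nhdsWithin_le_nhds) hne hfar hv
  refine h ⟨?_, mem_closure_iff_nhdsWithin_neBot.2 (neBot_of_le hUx)⟩
  rw [Submodule.eq_top_of_nonempty_interior' _ ⟨v, mem_interior.2
    ⟨ball v η, hball.trans Submodule.subset_span, isOpen_ball, mem_ball_self hη⟩⟩]
  exact dense_univ

theorem hasFDerivWithinAt_zero_of_eqOn_frontier {F : Type*} [NormedAddCommGroup F]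
    [NormedSpace ℝ F] {u : E → F} {u' : E →L[ℝ] F} (hs : IsClosed s) (hx : x ∈ s)
    (hux : ∀ z ∈ frontier s, u z = 0) (hu : HasFDerivWithinAt u u' s x)
    (h : ¬UniqueDiffWithinAt ℝ s x) : HasFDerivWithinAt u (0 : E →L[ℝ] F) s x := by
  have hs_univ : s ≠ univ := by
    rintro rfl
    exact h uniqueDiffWithinAt_univ
  have hxf : x ∈ frontier s := by
    rw [hs.frontier_eq]
    exact ⟨hx, fun hxi => h (uniqueDiffWithinAt_of_mem_nhds (mem_interior_iff_mem_nhds.1 hxi))⟩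
  have hnearest (y : E) : ∃ z, y ∈ s → z ∈ frontier s ∧ infDist y sᶜ = dist y z := by
    by_cases hy : y ∈ s
    · obtain ⟨z, hz⟩ := exists_mem_frontier_infDist_compl_eq_dist hy hs_univ
      exact ⟨z, fun _ => hz⟩
    · exact ⟨y, fun hy' => absurd hy' hy⟩
  choose p hp using hnearest
  have hpo : (fun y => y - p y) =o[𝓝[s] x] fun y => y - x := by
    refine (Asymptotics.isLittleO_norm_left).1
      ((isLittleO_infDist_compl_of_not_uniqueDiffWithinAt h).congr' ?_ .rfl)
    filter_upwards [self_mem_nhdsWithin] with y hy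
    rw [(hp y hy).2, dist_eq_norm]
  have hpO : (fun y => p y - x) =O[𝓝[s] x] fun y => y - x := by
    simpa using (Asymptotics.isBigO_refl (fun y => y - x) _).sub hpo.isBigO
  have hsub : Tendsto (fun y => y - x) (𝓝[s] x) (𝓝 0) :=
    tendsto_sub_nhds_zero_iff.2 nhdsWithin_le_nhds
  have hpx : Tendsto p (𝓝[s] x) (𝓝[s] x) :=
    tendsto_nhdsWithin_iff.2 ⟨tendsto_sub_nhds_zero_iff.1 (hpO.trans_tendsto hsub),
      eventually_nhdsWithin_of_forall fun y hy => hs.frontier_subset (hp y hy).1⟩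
  have huo := hasFDerivWithinAt_iff_isLittleO.1 hu
  have hupo := (huo.comp_tendsto hpx).trans_isBigO hpO
  have hlin := ((u'.isBigO_comp (fun y => y - p y) (𝓝[s] x)).trans_isLittleO hpo)
  refine hasFDerivWithinAt_iff_isLittleO.2 (((huo.sub hupo).add hlin).congr' ?_ .rfl)
  filter_upwards [self_mem_nhdsWithin] with y hy
  simp only [Function.comp_apply, hux x hxf, hux (p y) (hp y hy).1, map_sub,
    zero_apply]
  abel

theorem frontier_subset_closure_uniqueDiffWithinAt (hΩ : IsOpen Ω) :
    frontier Ω ⊆ closure {z ∈ frontier Ω | UniqueDiffWithinAt ℝ (closure Ω) z} := by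
  intro z hz
  have hzΩ : z ∉ Ω := (hΩ.frontier_eq ▸ hz).2
  refine Metric.mem_closure_iff.2 fun d hd => ?_
  obtain ⟨y, hy, hyz⟩ := Metric.mem_closure_iff.1 (frontier_subset_closure hz) (d / 2) (half_pos hd)
  obtain ⟨p, hp, hyp⟩ := exists_mem_frontier_infDist_compl_eq_dist hy
    (fun h => hzΩ (h ▸ mem_univ z))
  have hle : dist y p ≤ dist y z := hyp ▸ infDist_le_dist_of_mem hzΩ
  have hpos : 0 < dist y p := dist_pos.2 fun h => (hΩ.frontier_eq ▸ hp).2 (h ▸ hy)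
  have hsub : ball y (dist y p) ⊆ Ω := hyp ▸ ball_infDist_compl_subset
  refine ⟨p, ⟨hp, UniqueDiffWithinAt.mono ?_ (hsub.trans subset_closure)⟩, ?_⟩
  · refine uniqueDiffWithinAt_convex (convex_ball _ _) ?_ ?_
    · rwa [isOpen_ball.interior_eq, nonempty_ball]
    · simp [closure_ball _ hpos.ne', dist_comm]
  · linarith [dist_triangle_left z p y, dist_comm z y]

end BoundaryDerivative

section GradientExtension

variable {E : Type*} [NormedAddCommGroup E] [InnerProductSpace ℝ E] {Ω s : Set E}
  {u : E → ℝ} {x g : E}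

section CompleteSpace

variable [CompleteSpace E]

theorem gradientWithin_eq_of_uniqueDiffWithinAt (h : HasGradientWithinAt u g s x)
    (hs : UniqueDiffWithinAt ℝ s x) : gradientWithin u s x = g := by
  rw [gradientWithin, h.hasFDerivWithinAt.fderivWithin hs, LinearIsometryEquiv.symm_apply_apply]

theorem gradientWithin_closure_eqOn_gradient (hΩ : IsOpen Ω) (u : E → ℝ) :
    EqOn (gradientWithin u (closure Ω)) (∇ u) Ω := fun x hx => by
  rw [gradientWithin, gradient,
    fderivWithin_of_mem_nhds (mem_of_superset (hΩ.mem_nhds hx) subset_closure)]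

theorem exists_hasGradientWithinAt_tendsto_gradient (hΩ : IsOpen Ω)
    (hu : ContDiffWithinAt ℝ 1 u (closure Ω) x) (hx : x ∈ closure Ω) :
    ∃ g, HasGradientWithinAt u g (closure Ω) x ∧ Tendsto (∇ u) (𝓝[Ω] x) (𝓝 g) := by
  rw [← zero_add (1 : WithTop ℕ∞), contDiffWithinAt_succ_iff_hasFDerivWithinAt' (by simp),
    insert_eq_of_mem hx] at hu
  obtain ⟨s, hs, -, -, u', hu', hc⟩ := hu
  refine ⟨_, (hu' x (mem_of_mem_nhdsWithin hx hs)).hasGradientWithinAt, ?_⟩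
  refine (((InnerProductSpace.toDual ℝ E).symm.continuous.tendsto _).comp
    (hc.continuousWithinAt.mono subset_closure).tendsto).congr' ?_
  filter_upwards [self_mem_nhdsWithin, nhdsWithin_mono x subset_closure hs] with y hy hys
  have hnhds : closure Ω ∈ 𝓝 y := mem_of_superset (hΩ.mem_nhds hy) subset_closure
  exact ((hu' y hys).hasFDerivAt hnhds).hasGradientAt.gradient.symm

theorem exists_continuousOn_closure_hasGradientWithinAt (hΩ : IsOpen Ω)
    (hu : ContDiffOn ℝ 1 u (closure Ω)) :
    ∃ G : E → E, ContinuousOn G (closure Ω) ∧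
      ∀ z ∈ closure Ω, HasGradientWithinAt u (G z) (closure Ω) z := by
  have hlim (z) (hz : z ∈ closure Ω) :=
    exists_hasGradientWithinAt_tendsto_gradient hΩ (hu z hz) hz
  refine ⟨extendFrom Ω (∇ u), continuousOn_extendFrom subset_rfl fun z hz =>
    (hlim z hz).imp fun _ h => h.2, fun z hz => ?_⟩
  obtain ⟨g, hg, hlimg⟩ := hlim z hz
  rwa [extendFrom_eq hz hlimg]

end CompleteSpace

variable [FiniteDimensional ℝ E]

theorem norm_le_of_forall_frontier_norm_gradientWithin_le {G : E → E} {M : ℝ} (hΩ : IsOpen Ω)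
    (hGc : ContinuousOn G (closure Ω))
    (hG : ∀ z ∈ closure Ω, HasGradientWithinAt u (G z) (closure Ω) z)
    (hM : ∀ z ∈ frontier Ω, ‖gradientWithin u (closure Ω) z‖ ≤ M) (hx : x ∈ frontier Ω) :
    ‖G x‖ ≤ M := by
  set R := {z ∈ frontier Ω | UniqueDiffWithinAt ℝ (closure Ω) z}
  have hR : R ⊆ closure Ω := fun z hz => frontier_subset_closure hz.1
  have : (𝓝[R] x).NeBot :=
    mem_closure_iff_nhdsWithin_neBot.1 (frontier_subset_closure_uniqueDiffWithinAt hΩ hx)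
  refine le_of_tendsto ((hGc x (frontier_subset_closure hx)).mono hR).norm
    (eventually_nhdsWithin_of_forall fun z hz => ?_)
  rw [← gradientWithin_eq_of_uniqueDiffWithinAt (hG z (hR hz)) hz.2]
  exact hM z hz.1

/- `gradientWithin` is an arbitrary choice where `closure Ω` is not uniquely differentiable, unless
zero is a derivative there. -/
theorem norm_gradientWithin_le_of_frontier_eq_zero (hu : HasGradientWithinAt u g (closure Ω) x)
    (hx : x ∈ closure Ω) (hu0 : ∀ z ∈ frontier Ω, u z = 0) :
    ‖gradientWithin u (closure Ω) x‖ ≤ ‖g‖ := by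
  by_cases h : UniqueDiffWithinAt ℝ (closure Ω) x
  · rw [gradientWithin_eq_of_uniqueDiffWithinAt hu h]
  · have hzero := hasFDerivWithinAt_zero_of_eqOn_frontier isClosed_closure hx
      (fun z hz => hu0 z (frontier_closure_subset hz)) hu.hasFDerivWithinAt h
    simp [gradientWithin, fderivWithin, hzero]

theorem bddAbove_norm_gradientWithin_frontier (hΩo : IsOpen Ω) (hΩb : Bornology.IsBounded Ω)
    (hu : ContDiffOn ℝ 1 u (closure Ω)) (hu0 : ∀ z ∈ frontier Ω, u z = 0) :
    BddAbove ((fun z => ‖gradientWithin u (closure Ω) z‖) '' frontier Ω) := by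
  obtain ⟨G, hGc, hG⟩ := exists_continuousOn_closure_hasGradientWithinAt hΩo hu
  obtain ⟨C, hC⟩ := hΩb.isCompact_closure.exists_bound_of_continuousOn hGc
  refine ⟨C, forall_mem_image.2 fun z hz => ?_⟩
  have hz' := frontier_subset_closure hz
  exact (norm_gradientWithin_le_of_frontier_eq_zero (hG z hz') hz' hu0).trans (hC z hz')

end GradientExtension

section RegularizedUnit

variable {E : Type*} [NormedAddCommGroup E] [InnerProductSpace ℝ E] {ε : ℝ}

/-- The field `p ↦ p / √(ε² + |p|²)`, a regularization of `p / |p|` at the origin; the equation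
under study prescribes the divergence of its composition with `∇u`. -/
noncomputable def regularizedUnit (ε : ℝ) (p : E) : E := (√(ε ^ 2 + ‖p‖ ^ 2))⁻¹ • p

theorem contDiff_sq_add_norm_sq_rpow (hε : ε ≠ 0) (c : ℝ) {n : WithTop ℕ∞} :
    ContDiff ℝ n fun p : E => (ε ^ 2 + ‖p‖ ^ 2) ^ c :=
  (contDiff_const.add (contDiff_norm_sq ℝ)).rpow_const_of_ne fun p => by positivity

theorem contDiff_regularizedUnit (hε : ε ≠ 0) {n : WithTop ℕ∞} :
    ContDiff ℝ n (regularizedUnit ε : E → E) := by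
  have hpos (p : E) : ε ^ 2 + ‖p‖ ^ 2 ≠ 0 := by positivity
  have hsqrt : ContDiff ℝ n fun p : E => √(ε ^ 2 + ‖p‖ ^ 2) :=
    (contDiff_const.add (contDiff_norm_sq ℝ)).sqrt hpos
  exact (hsqrt.inv fun p => by positivity).smul contDiff_id

theorem inner_fderiv_regularizedUnit_self_pos (hε : ε ≠ 0) (p : E) {w : E} (hw : w ≠ 0) :
    0 < ⟪fderiv ℝ (regularizedUnit ε) p w, w⟫ := by
  have hS : 0 < ε ^ 2 + ‖p‖ ^ 2 := by positivity
  set r := √(ε ^ 2 + ‖p‖ ^ 2) with hr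
  have hr0 : 0 < r := Real.sqrt_pos.2 hS
  have hr2 : r ^ 2 = ε ^ 2 + ‖p‖ ^ 2 := Real.sq_sqrt hS.le
  have hderiv := ((hasDerivAt_inv hr0.ne').comp_hasFDerivAt p
    (((hasFDerivAt_id p).norm_sq.const_add (ε ^ 2)).sqrt hS.ne')).smul (hasFDerivAt_id p)
  have hinner : ⟪fderiv ℝ (regularizedUnit ε) p w, w⟫
      = (r ^ 2 * ‖w‖ ^ 2 - ⟪p, w⟫ ^ 2) / r ^ 3 := by
    rw [show fderiv ℝ (regularizedUnit ε) p = _ from hderiv.fderiv]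
    simp only [id_eq, Function.comp_apply, ← hr, one_div, mul_inv_rev,
      ContinuousLinearMap.comp_id, neg_smul, add_apply, smul_apply, ContinuousLinearMap.id_apply,
      ContinuousLinearMap.smulRight_apply, neg_apply, coe_innerSL_apply, nsmul_eq_mul,
      Nat.cast_ofNat, smul_eq_mul, inner_add_left, real_inner_smul_left,
      inner_self_eq_norm_sq_to_K, Real.ringHom_apply, inner_neg_left]
    field_simp
    ring
  have hcs : ⟪p, w⟫ ^ 2 ≤ ‖p‖ ^ 2 * ‖w‖ ^ 2 := by
    rw [← mul_pow, sq_le_sq, abs_mul, abs_norm, abs_norm]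
    exact abs_real_inner_le_norm p w
  have hw2 : 0 < ε ^ 2 * ‖w‖ ^ 2 := by positivity
  rw [hinner, hr2]
  exact div_pos (by linarith) (by positivity)

end RegularizedUnit

theorem norm_gradientWithin_le_of_forall_frontier {E : Type*} [NormedAddCommGroup E]
    [InnerProductSpace ℝ E] [FiniteDimensional ℝ E] [Nontrivial E] {X : E → E} {H : E → ℝ}
    (hX : ContDiff ℝ 2 X) (hX_pos : ∀ p w, w ≠ 0 → 0 < ⟪fderiv ℝ X p w, w⟫)
    (hH : ContDiff ℝ 1 H) {Ω : Set E} (hΩo : IsOpen Ω) (hΩb : Bornology.IsBounded Ω)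
    {u : E → ℝ} (hu : ContDiffOn ℝ 1 u (closure Ω)) (hu_int : ContDiffOn ℝ 3 u Ω)
    (hu_pde : ∀ z ∈ Ω, divergence (fun y => X (gradientWithin u (closure Ω) y)) z
      = H (gradientWithin u (closure Ω) z))
    {M : ℝ} (hM : ∀ z ∈ frontier Ω, ‖gradientWithin u (closure Ω) z‖ ≤ M) {x : E} (hx : x ∈ Ω) :
    ‖gradientWithin u (closure Ω) x‖ ≤ M := by
  have hgrad : EqOn (gradientWithin u (closure Ω)) (∇ u) Ω :=
    gradientWithin_closure_eqOn_gradient hΩo u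
  have hpde (z) (hz : z ∈ Ω) : divergence (fun y => X (∇ u y)) z = H (∇ u z) := by
    have hnear : (fun y => X (gradientWithin u (closure Ω) y)) =ᶠ[𝓝 z] fun y => X (∇ u y) := by
      filter_upwards [hΩo.mem_nhds hz] with y hy using by rw [hgrad hy]
    rw [← hgrad hz, ← hu_pde z hz, divergence, divergence, hnear.fderiv_eq]
  obtain ⟨G, hGc, hG⟩ := exists_continuousOn_closure_hasGradientWithinAt hΩo hu
  have hGΩ : EqOn G (∇ u) Ω := fun z hz => by
    rw [← hgrad hz, gradientWithin_eq_of_uniqueDiffWithinAt (hG z (subset_closure hz))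
      (hΩo.uniqueDiffWithinAt hz).closure]
  obtain ⟨L, hL, hLx⟩ := exists_dual_vector' ℝ (∇ u x)
  set e := (InnerProductSpace.toDual ℝ E).symm L
  have he : ‖e‖ = 1 := ((InnerProductSpace.toDual ℝ E).symm.norm_map L).trans hL
  have hex : ⟪e, ∇ u x⟫ = ‖∇ u x‖ := InnerProductSpace.toDual_symm_apply.trans hLx
  have hM' (z) (hz : z ∈ frontier Ω) : ⟪e, G z⟫ ≤ M := by
    refine (real_inner_le_norm e (G z)).trans ?_
    rw [he, one_mul]
    exact norm_le_of_forall_frontier_norm_gradientWithin_le hΩo hGc hG hM hz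
  rw [hgrad hx, ← hex]
  exact inner_gradient_le_of_forall_frontier hX hX_pos hH hΩo hΩb hu_int hpde hGc hGΩ
    (norm_ne_zero_iff.1 (he.trans_ne one_ne_zero)) hM' hx

theorem interior_gradient_estimate_family_general {E : Type*} [NormedAddCommGroup E]
    [InnerProductSpace ℝ E] [FiniteDimensional ℝ E] [Nontrivial E] {ε : ℝ} (hε : ε ≠ 0)
    {H : E → ℝ} (hH : ContDiff ℝ 1 H) {Ω : Set E} (hΩo : IsOpen Ω)
    (hΩb : Bornology.IsBounded Ω) {u : E → ℝ} (hu : ContDiffOn ℝ 1 u (closure Ω))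
    (hu_int : ContDiffOn ℝ 3 u Ω) (hu_bd : ∀ x ∈ frontier Ω, u x = 0)
    (hu_pde : ∀ x ∈ Ω, divergence (fun y => regularizedUnit ε (gradientWithin u (closure Ω) y)) x
      = H (gradientWithin u (closure Ω) x)) :
    ∀ x ∈ Ω, ‖gradientWithin u (closure Ω) x‖ ≤
      sSup ((fun y => √(ε ^ 2 + ‖gradientWithin u (closure Ω) y‖ ^ 2)) '' frontier Ω) := by
  have hbdd : BddAbove
      ((fun y => √(ε ^ 2 + ‖gradientWithin u (closure Ω) y‖ ^ 2)) '' frontier Ω) := by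
    obtain ⟨C, hC⟩ := bddAbove_norm_gradientWithin_frontier hΩo hΩb hu hu_bd
    refine ⟨√(ε ^ 2 + C ^ 2), forall_mem_image.2 fun y hy => ?_⟩
    have : ‖gradientWithin u (closure Ω) y‖ ≤ C := hC (mem_image_of_mem _ hy)
    gcongr
  have hM (y) (hy : y ∈ frontier Ω) : ‖gradientWithin u (closure Ω) y‖ ≤
      sSup ((fun y => √(ε ^ 2 + ‖gradientWithin u (closure Ω) y‖ ^ 2)) '' frontier Ω) :=
    (Real.le_sqrt_of_sq_le (le_add_of_nonneg_left (sq_nonneg ε))).trans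
      (le_csSup hbdd (mem_image_of_mem _ hy))
  exact fun x hx => norm_gradientWithin_le_of_forall_frontier (contDiff_regularizedUnit hε)
    (fun p w => inner_fderiv_regularizedUnit_self_pos hε p) hH hΩo hΩb hu hu_int hu_pde hM hx

/-- **Uniform interior gradient estimate for the continuity-method family** `(★★)_{ε,κ}`
(flat ambient space): if `u` is smooth on the closure of `Ω`, vanishes on `∂Ω`, and
satisfies `div(∇u/√(ε² + |∇u|²)) = −κ(ε² + |∇u|²)^{−1/(2k)}` in `Ω` for some
`κ ∈ [0,1]`, then `sup_Ω |∇u| ≤ sup_{∂Ω} √(ε² + |∇u|²)`, the gradient on `∂Ω` denoting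
the continuous extension of the gradient of `u`. -/
theorem interior_gradient_estimate_family (n : ℕ) (hn : 1 ≤ n) (k : ℝ) (hk : 1 ≤ k)
    (ε : ℝ) (hε : 0 < ε) (κ : ℝ) (hκ : κ ∈ Icc (0 : ℝ) 1)
    (Ω : Set (EuclideanSpace ℝ (Fin (n + 1)))) (hΩo : IsOpen Ω)
    (hΩb : Bornology.IsBounded Ω)
    (u : EuclideanSpace ℝ (Fin (n + 1)) → ℝ)
    (hu_smooth : ContDiffOn ℝ (⊤ : ℕ∞) u (closure Ω))
    (hu_bd : ∀ x ∈ frontier Ω, u x = 0)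
    (hu_pde : ∀ x ∈ Ω,
      vdiv (fun y => (Real.sqrt (ε ^ 2 + ‖gradC Ω u y‖ ^ 2))⁻¹ • gradC Ω u y) x
        = -(κ * (ε ^ 2 + ‖gradC Ω u x‖ ^ 2) ^ (-(1 : ℝ) / (2 * k)))) :
    ∀ x ∈ Ω, ‖gradC Ω u x‖ ≤
      sSup ((fun y => Real.sqrt (ε ^ 2 + ‖gradC Ω u y‖ ^ 2)) '' frontier Ω) := by
  exact interior_gradient_estimate_family_general hε.ne'
    (contDiff_const.mul (contDiff_sq_add_norm_sq_rpow hε.ne' (-1 / (2 * k)))).neg hΩo hΩb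
    (hu_smooth.of_le (by exact_mod_cast le_top))
    ((hu_smooth.mono subset_closure).of_le (WithTop.coe_le_coe.2 (le_top : (3 : ℕ∞) ≤ ⊤)))
    hu_bd hu_pde
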